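/- arXiv:2001.11113 — 7 statements merged into one kernel-verified Lean document; each statement's English description precedes it below -/
import Mathlib

section
/- Let P be an n×n irreducible row-stochastic matrix, let d ∈ ℝ^n be a probability vector with strictly positive entries satisfying Pᵀ d = d (a stationary distribution), let d_μ ∈ ℝ^n be a probability vector with strictly positive entries, and let D := diag(d_μ). If τ ∈ ℝ^n satisfies Dτ = Pᵀ(Dτ) and d_μᵀτ = 1, then Dτ = d, i.e., τ = D^{-1} d. -/
open Matrix in
/-- A row vector fixed by `P` is fixed by every power of `P`. -/
theorem Matrix.vecMul_pow_eq_self {ι R : Type*} [Fintype ι] [DecidableEq ι] [Semiring R]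
    {P : Matrix ι ι R} {y : ι → R} (hy : y ᵥ* P = y) (k : ℕ) : y ᵥ* P ^ k = y := by
  induction k with
  | zero => simp
  | succ k ih => rw [pow_succ, ← Matrix.vecMul_vecMul, ih, hy]

open Matrix in
/-- A nonnegative left fixed vector of an irreducible nonnegative matrix that vanishes at one
index vanishes identically. -/
theorem Matrix.eq_zero_of_vecMul_eq_self_of_apply_eq_zero {ι : Type*} [Fintype ι] [DecidableEq ι]
    {P : Matrix ι ι ℝ} (hP : ∀ i j, 0 ≤ P i j) (hirr : ∀ i j, ∃ k : ℕ, 1 ≤ k ∧ 0 < (P ^ k) i j)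
    {y : ι → ℝ} (hy : y ᵥ* P = y) (hy0 : ∀ i, 0 ≤ y i) {i : ι} (hi : y i = 0) : y = 0 := by
  funext j
  obtain ⟨k, -, hk⟩ := hirr j i
  have hpow : ∀ a b, 0 ≤ (P ^ k) a b := Matrix.pow_apply_nonneg hP k
  have hsum : ∑ a, y a * (P ^ k) a i = 0 :=
    (congrFun (Matrix.vecMul_pow_eq_self hy k) i).trans hi
  have hj := (Finset.sum_eq_zero_iff_of_nonneg
    fun a _ => mul_nonneg (hy0 a) (hpow a i)).1 hsum j (Finset.mem_univ j)
  exact (mul_eq_zero.1 hj).resolve_right hk.ne'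

open Matrix in
/-- The left fixed space of an irreducible nonnegative matrix with a positive left fixed vector
`d` is spanned by `d`. -/
theorem Matrix.exists_eq_smul_of_vecMul_eq_self {ι : Type*} [Fintype ι] [DecidableEq ι]
    [Nonempty ι] {P : Matrix ι ι ℝ} (hP : ∀ i j, 0 ≤ P i j)
    (hirr : ∀ i j, ∃ k : ℕ, 1 ≤ k ∧ 0 < (P ^ k) i j) {d x : ι → ℝ} (hd_pos : ∀ i, 0 < d i)
    (hd : d ᵥ* P = d) (hx : x ᵥ* P = x) : ∃ c : ℝ, x = c • d := by
  obtain ⟨i, hi⟩ := Finite.exists_min fun i => x i / d i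
  refine ⟨x i / d i, sub_eq_zero.1 <|
    Matrix.eq_zero_of_vecMul_eq_self_of_apply_eq_zero hP hirr (i := i) ?_ (fun j => ?_) ?_⟩
  · rw [Matrix.sub_vecMul, Matrix.smul_vecMul, hx, hd]
  · simpa using (le_div_iff₀ (hd_pos j)).1 (hi j)
  · simp [(hd_pos i).ne']

/-- γ = 1 case. For an irreducible row-stochastic `P` with strictly
positive stationary distribution `d`, strictly positive probability vector `d_μ`
and `D := diag(d_μ)`: if `Dτ = Pᵀ(Dτ)` and `d_μᵀτ = 1`, then `Dτ = d`,
i.e. `τ = D⁻¹ d`. -/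
theorem stmt4 {n : ℕ} (hn : 1 ≤ n) (P : Matrix (Fin n) (Fin n) ℝ)
    (hP_nonneg : ∀ i j, 0 ≤ P i j) (hP_row : ∀ i, ∑ j, P i j = 1)
    (hP_irred : ∀ i j, ∃ k : ℕ, 1 ≤ k ∧ 0 < (P ^ k) i j)
    (d : Fin n → ℝ) (hd_pos : ∀ i, 0 < d i) (hd_sum : ∑ i, d i = 1)
    (hd_stat : P.transpose.mulVec d = d)
    (dμ : Fin n → ℝ) (hdμ_pos : ∀ i, 0 < dμ i) (hdμ_sum : ∑ i, dμ i = 1)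
    (τ : Fin n → ℝ)
    (hτ_eig : (Matrix.diagonal dμ).mulVec τ
        = P.transpose.mulVec ((Matrix.diagonal dμ).mulVec τ))
    (hτ_norm : ∑ i, dμ i * τ i = 1) :
    (Matrix.diagonal dμ).mulVec τ = d ∧ τ = fun i => d i / dμ i := by
  have : Nonempty (Fin n) := ⟨⟨0, hn⟩⟩
  rw [Matrix.mulVec_transpose] at hd_stat hτ_eig
  obtain ⟨c, hc⟩ := Matrix.exists_eq_smul_of_vecMul_eq_self hP_nonneg hP_irred hd_pos
    hd_stat hτ_eig.symm
  have hc' : ∀ i, dμ i * τ i = c * d i := fun i => by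
    simpa [Matrix.mulVec_diagonal] using congrFun hc i
  obtain rfl : c = 1 := by
    simpa [hc', ← Finset.mul_sum, hd_sum] using hτ_norm
  refine ⟨by rw [hc, one_smul], funext fun i => ?_⟩
  rw [eq_div_iff (hdμ_pos i).ne', mul_comm, hc' i, one_mul]
end

section
/- Let P be an n×n row-stochastic matrix, μ0 ∈ ℝ^n a probability vector, γ ∈ [0,1), d_μ ∈ ℝ^n a probability vector with strictly positive entries, D := diag(d_μ), λ > 0, and define for τ ∈ ℝ^n: L(τ) := (1/2) Σ_i ((Tτ − Dτ)_i)² / (d_μ)_i + (λ/2)(d_μᵀτ − 1)², where Tτ := (1−γ)μ0 + γPᵀDτ. Then L(τ*) = 0 for τ* := D^{-1}(1−γ)(I − γPᵀ)^{-1}μ0, and L(τ) > 0 for every τ ≠ τ*; i.e., τ minimizes L over ℝ^n if and only if τ = τ*. -/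
open Matrix

/-- Discounting a row-stochastic matrix makes `1 - γPᵀ` invertible. -/
theorem isUnit_det_one_sub_smul_transpose {n : ℕ} {P : Matrix (Fin n) (Fin n) ℝ}
    (hP_nonneg : ∀ i j, 0 ≤ P i j) (hP_row : ∀ i, ∑ j, P i j = 1)
    {γ : ℝ} (hγ0 : 0 ≤ γ) (hγ1 : γ < 1) :
    IsUnit ((1 : Matrix (Fin n) (Fin n) ℝ) - γ • Pᵀ).det := by
  rw [isUnit_iff_ne_zero, ← det_transpose]
  apply det_ne_zero_of_sum_row_lt_diag
  intro k
  have hoff : ∀ j ∈ Finset.univ.erase k,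
      ‖((1 : Matrix (Fin n) (Fin n) ℝ) - γ • Pᵀ)ᵀ k j‖ = γ * P k j := by
    intro j hj
    have hjk : j ≠ k := Finset.ne_of_mem_erase hj
    simp [one_apply_ne hjk, abs_of_nonneg hγ0, abs_of_nonneg (hP_nonneg k j)]
  have hsum : ∑ j ∈ Finset.univ.erase k, P k j = 1 - P k k := by
    rw [← hP_row k, ← Finset.sum_erase_add _ _ (Finset.mem_univ k)]
    ring
  rw [Finset.sum_congr rfl hoff, ← Finset.mul_sum, hsum]
  calc γ * (1 - P k k) < 1 - γ * P k k := by linarith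
    _ ≤ ‖((1 : Matrix (Fin n) (Fin n) ℝ) - γ • Pᵀ)ᵀ k k‖ := by
      simpa using le_abs_self (1 - γ * P k k)

/-- Multiplication by the transpose of a row-stochastic matrix preserves total mass. -/
theorem sum_transpose_mulVec_of_row_sum_one {n : ℕ} {P : Matrix (Fin n) (Fin n) ℝ}
    (hP_row : ∀ i, ∑ j, P i j = 1) (y : Fin n → ℝ) :
    ∑ i, (Pᵀ *ᵥ y) i = ∑ i, y i := by
  simp only [mulVec, dotProduct, transpose_apply]
  rw [Finset.sum_comm]
  simp [← Finset.sum_mul, hP_row]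

/-- The GradientDICE objective
`L(τ) = (1/2)‖Tτ - Dτ‖²_{D⁻¹} + (λ/2)(d_μᵀτ - 1)²` with
`Tτ = (1-γ)μ0 + γPᵀDτ` vanishes at `τ* = D⁻¹(1-γ)(I-γPᵀ)⁻¹μ0` and is strictly
positive elsewhere; hence `τ` minimizes `L` iff `τ = τ*`. -/
theorem stmt5 {n : ℕ} (hn : 1 ≤ n) (P : Matrix (Fin n) (Fin n) ℝ)
    (hP_nonneg : ∀ i j, 0 ≤ P i j) (hP_row : ∀ i, ∑ j, P i j = 1)
    (γ : ℝ) (hγ0 : 0 ≤ γ) (hγ1 : γ < 1)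
    (μ0 : Fin n → ℝ) (hμ0_nonneg : ∀ i, 0 ≤ μ0 i) (hμ0_sum : ∑ i, μ0 i = 1)
    (dμ : Fin n → ℝ) (hdμ_pos : ∀ i, 0 < dμ i) (hdμ_sum : ∑ i, dμ i = 1)
    (lam : ℝ) (hlam : 0 < lam)
    (L : (Fin n → ℝ) → ℝ)
    (hL : ∀ τ, L τ =
      (1/2) * ∑ i, (((1 - γ) • μ0
          + γ • P.transpose.mulVec ((Matrix.diagonal dμ).mulVec τ)
          - (Matrix.diagonal dμ).mulVec τ) i) ^ 2 / dμ i
      + (lam/2) * ((∑ i, dμ i * τ i) - 1) ^ 2)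
    (τstar : Fin n → ℝ)
    (hτstar : τstar = fun i =>
      ((1 - γ) • (((1 : Matrix (Fin n) (Fin n) ℝ) - γ • P.transpose)⁻¹.mulVec μ0)) i
        / dμ i) :
    L τstar = 0 ∧ (∀ τ, τ ≠ τstar → 0 < L τ) ∧
      (∀ τ, (∀ τ', L τ ≤ L τ') ↔ τ = τstar) := by
  have hdet := isUnit_det_one_sub_smul_transpose hP_nonneg hP_row hγ0 hγ1
  have hdiag : ∀ τ, diagonal dμ *ᵥ τ = fun i => dμ i * τ i := fun τ =>
    funext fun i => mulVec_diagonal dμ τ i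
  have hres : ∀ τ, (1 - γ) • μ0 + γ • P.transpose.mulVec ((diagonal dμ).mulVec τ)
      - (diagonal dμ).mulVec τ = 0 ↔ τ = τstar := by
    intro τ
    have hsolve : (1 - γ) • μ0 + γ • P.transpose.mulVec ((diagonal dμ).mulVec τ)
        - (diagonal dμ).mulVec τ = 0 ↔
        ((1 : Matrix (Fin n) (Fin n) ℝ) - γ • Pᵀ) *ᵥ (diagonal dμ *ᵥ τ) = (1 - γ) • μ0 := by
      rw [sub_mulVec, one_mulVec, smul_mulVec, sub_eq_zero, sub_eq_iff_eq_add, eq_comm]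
    have hinv : ((1 : Matrix (Fin n) (Fin n) ℝ) - γ • Pᵀ) *ᵥ (diagonal dμ *ᵥ τ)
        = (1 - γ) • μ0 ↔
        diagonal dμ *ᵥ τ = (1 - γ) • (((1 : Matrix (Fin n) (Fin n) ℝ) - γ • Pᵀ)⁻¹ *ᵥ μ0) := by
      constructor
      · intro h
        rw [← mulVec_smul, ← h, mulVec_mulVec, nonsing_inv_mul _ hdet, one_mulVec]
      · intro h
        rw [h, mulVec_smul, mulVec_mulVec, mul_nonsing_inv _ hdet, one_mulVec]
    rw [hsolve, hinv, hdiag, hτstar, funext_iff, funext_iff]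
    refine forall_congr' fun i => ?_
    rw [eq_div_iff (hdμ_pos i).ne', mul_comm]
  have hterm : ∀ τ i, 0 ≤ (((1 - γ) • μ0
      + γ • P.transpose.mulVec ((diagonal dμ).mulVec τ)
      - (diagonal dμ).mulVec τ) i) ^ 2 / dμ i := fun τ i =>
    div_nonneg (sq_nonneg _) (hdμ_pos i).le
  have hzero : L τstar = 0 := by
    have hr := (hres τstar).2 rfl
    have hmass : ∑ i, dμ i * τstar i = 1 := by
      have h := congrArg (fun v : Fin n → ℝ => ∑ i, v i) hr
      simp only [Pi.sub_apply, Pi.add_apply, Pi.smul_apply, smul_eq_mul, Pi.zero_apply,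
        Finset.sum_sub_distrib, Finset.sum_add_distrib, ← Finset.mul_sum,
        sum_transpose_mulVec_of_row_sum_one hP_row, hμ0_sum, Finset.sum_const_zero,
        hdiag] at h
      have hne : 1 - γ ≠ 0 := by linarith
      apply mul_left_cancel₀ hne
      linarith
    rw [hL, hr, hmass]
    simp
  have hpos : ∀ τ, τ ≠ τstar → 0 < L τ := by
    intro τ hτ
    obtain ⟨i, hi⟩ := Function.ne_iff.1 (mt (hres τ).1 hτ)
    have hsum := Finset.sum_pos' (fun j _ => hterm τ j)
      ⟨i, Finset.mem_univ i, div_pos (sq_pos_of_ne_zero hi) (hdμ_pos i)⟩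
    rw [hL]
    positivity
  refine ⟨hzero, hpos, fun τ => ⟨fun hmin => ?_, ?_⟩⟩
  · by_contra hτ
    exact absurd (hmin τstar) (by rw [hzero]; exact not_le.2 (hpos τ hτ))
  · rintro rfl τ'
    by_cases hτ' : τ' = τ
    · rw [hτ']
    · rw [hzero]
      exact (hpos τ' hτ').le
end

section
/- Let P be an n×n irreducible row-stochastic matrix with stationary distribution d ∈ ℝ^n having strictly positive entries, let d_μ ∈ ℝ^n be a probability vector with strictly positive entries, D := diag(d_μ), λ > 0, and define for τ ∈ ℝ^n: L(τ) := (1/2) Σ_i ((PᵀDτ − Dτ)_i)² / (d_μ)_i + (λ/2)(d_μᵀτ − 1)². Then L(τ*) = 0 for τ* := D^{-1}d, and L(τ) > 0 for every τ ≠ τ*; i.e., τ minimizes L over ℝ^n if and only if τ = τ*. -/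
open Matrix

namespace Matrix

variable {ι : Type*} [Fintype ι] [DecidableEq ι]

/-- A row vector fixed by `P` is fixed by every power of `P`. -/
theorem vecMul_pow_eq_self_s6 {R : Type*} [Semiring R] {P : Matrix ι ι R} {v : ι → R}
    (hv : v ᵥ* P = v) (k : ℕ) : v ᵥ* P ^ k = v := by
  induction k with
  | zero => simp
  | succ k ih => rw [pow_succ, ← vecMul_vecMul, ih, hv]

/-- A nonnegative row vector fixed by an irreducible nonnegative matrix vanishes as soon as one of
its entries does. -/
theorem eq_zero_of_vecMul_eq_self_of_nonneg {P : Matrix ι ι ℝ} (hP : ∀ i j, 0 ≤ P i j)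
    (hirr : ∀ i j, ∃ k : ℕ, 1 ≤ k ∧ 0 < (P ^ k) i j) {w : ι → ℝ} (hw : w ᵥ* P = w)
    (hw_nonneg : ∀ i, 0 ≤ w i) {i₀ : ι} (hi₀ : w i₀ = 0) : w = 0 := by
  funext j
  obtain ⟨k, -, hk⟩ := hirr j i₀
  have hsum : ∑ i, w i * (P ^ k) i i₀ = 0 :=
    (congrFun (vecMul_pow_eq_self_s6 hw k) i₀).trans hi₀
  have hterm := (Finset.sum_eq_zero_iff_of_nonneg fun i _ =>
    mul_nonneg (hw_nonneg i) (pow_apply_nonneg hP k i i₀)).1 hsum j (Finset.mem_univ j)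
  exact (mul_eq_zero.1 hterm).resolve_right hk.ne'

/-- Every row vector fixed by an irreducible nonnegative matrix is a multiple of a given strictly
positive one. -/
theorem exists_eq_smul_of_vecMul_eq_self_s6 [Nonempty ι] {P : Matrix ι ι ℝ}
    (hP : ∀ i j, 0 ≤ P i j) (hirr : ∀ i j, ∃ k : ℕ, 1 ≤ k ∧ 0 < (P ^ k) i j)
    {d v : ι → ℝ} (hd_pos : ∀ i, 0 < d i) (hd : d ᵥ* P = d) (hv : v ᵥ* P = v) :
    ∃ c : ℝ, v = c • d := by
  obtain ⟨i₀, hmin⟩ := Finite.exists_min fun i => v i / d i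
  refine ⟨v i₀ / d i₀, sub_eq_zero.1 ?_⟩
  refine eq_zero_of_vecMul_eq_self_of_nonneg hP hirr (i₀ := i₀) ?_ (fun i => ?_) ?_
  · rw [sub_vecMul, smul_vecMul, hd, hv]
  · have := (le_div_iff₀ (hd_pos i)).1 (hmin i)
    simpa using this
  · simp [(hd_pos i₀).ne']

end Matrix

/-- γ = 1 case of the GradientDICE consistency theorem.
For irreducible row-stochastic `P` with strictly positive stationary
distribution `d`, the objective
`L(τ) = (1/2)‖PᵀDτ - Dτ‖²_{D⁻¹} + (λ/2)(d_μᵀτ - 1)²` vanishes at `τ* = D⁻¹ d`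
and is strictly positive elsewhere; hence `τ` minimizes `L` iff `τ = τ*`. -/
theorem stmt6 {n : ℕ} (hn : 1 ≤ n) (P : Matrix (Fin n) (Fin n) ℝ)
    (hP_nonneg : ∀ i j, 0 ≤ P i j) (hP_row : ∀ i, ∑ j, P i j = 1)
    (hP_irred : ∀ i j, ∃ k : ℕ, 1 ≤ k ∧ 0 < (P ^ k) i j)
    (d : Fin n → ℝ) (hd_pos : ∀ i, 0 < d i) (hd_sum : ∑ i, d i = 1)
    (hd_stat : P.transpose.mulVec d = d)
    (dμ : Fin n → ℝ) (hdμ_pos : ∀ i, 0 < dμ i) (hdμ_sum : ∑ i, dμ i = 1)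
    (lam : ℝ) (hlam : 0 < lam)
    (L : (Fin n → ℝ) → ℝ)
    (hL : ∀ τ, L τ =
      (1/2) * ∑ i, ((P.transpose.mulVec ((Matrix.diagonal dμ).mulVec τ)
          - (Matrix.diagonal dμ).mulVec τ) i) ^ 2 / dμ i
      + (lam/2) * ((∑ i, dμ i * τ i) - 1) ^ 2)
    (τstar : Fin n → ℝ) (hτstar : τstar = fun i => d i / dμ i) :
    L τstar = 0 ∧ (∀ τ, τ ≠ τstar → 0 < L τ) ∧
      (∀ τ, (∀ τ', L τ ≤ L τ') ↔ τ = τstar) := by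
  have : Nonempty (Fin n) := ⟨⟨0, hn⟩⟩
  have hdiag (τ : Fin n → ℝ) : (diagonal dμ) *ᵥ τ = fun i => dμ i * τ i :=
    funext fun i => mulVec_diagonal dμ τ i
  have hzero : L τstar = 0 := by
    have hstar : (fun i => dμ i * τstar i) = d := by
      funext i
      rw [hτstar]
      exact mul_div_cancel₀ _ (hdμ_pos i).ne'
    rw [hL, hdiag, hstar, hd_stat, hd_sum]
    simp
  have hterm_nonneg (τ : Fin n → ℝ) (i : Fin n) :
      0 ≤ ((Pᵀ *ᵥ (diagonal dμ *ᵥ τ) - diagonal dμ *ᵥ τ) i) ^ 2 / dμ i :=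
    div_nonneg (sq_nonneg _) (hdμ_pos i).le
  have hpos (τ : Fin n → ℝ) (hτ : τ ≠ τstar) : 0 < L τ := by
    contrapose! hτ
    have hsum_nonneg := Finset.sum_nonneg fun i (_ : i ∈ Finset.univ) => hterm_nonneg τ i
    have hpen_nonneg : 0 ≤ (lam / 2) * ((∑ i, dμ i * τ i) - 1) ^ 2 := by positivity
    rw [hL] at hτ
    have hpen : (lam / 2) * ((∑ i, dμ i * τ i) - 1) ^ 2 = 0 := by linarith
    have hnorm : ∑ i, dμ i * τ i = 1 :=
      sub_eq_zero.1 (pow_eq_zero_iff two_ne_zero |>.1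
        ((mul_eq_zero.1 hpen).resolve_left (half_pos hlam).ne'))
    have hres := (Finset.sum_eq_zero_iff_of_nonneg fun i _ => hterm_nonneg τ i).1
      (le_antisymm (by linarith) hsum_nonneg)
    have hfix : (diagonal dμ *ᵥ τ) ᵥ* P = diagonal dμ *ᵥ τ := by
      rw [← mulVec_transpose]
      refine sub_eq_zero.1 (funext fun i => ?_)
      exact pow_eq_zero_iff two_ne_zero |>.1
        ((div_eq_zero_iff.1 (hres i (Finset.mem_univ i))).resolve_right (hdμ_pos i).ne')
    obtain ⟨c, hc⟩ := exists_eq_smul_of_vecMul_eq_self_s6 hP_nonneg hP_irred hd_pos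
      (by rwa [← mulVec_transpose]) hfix
    rw [hdiag] at hc
    have hentry (i : Fin n) : dμ i * τ i = c * d i := congrFun hc i
    have hc_one : c = 1 := by
      simpa [hentry, ← Finset.mul_sum, hd_sum] using hnorm
    rw [hτstar]
    funext i
    rw [eq_div_iff (hdμ_pos i).ne', mul_comm, hentry, hc_one, one_mul]
  refine ⟨hzero, hpos, fun τ => ⟨fun hmin => ?_, ?_⟩⟩
  · by_contra hne
    exact absurd (hmin τstar) (not_le.2 (hzero ▸ hpos τ hne))
  · rintro rfl τ'
    rcases eq_or_ne τ' τ with rfl | hne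
    · exact le_rfl
    · exact hzero.le.trans (hpos τ' hne).le
end

section
/- Let P be an n×n row-stochastic matrix, μ0 ∈ ℝ^n a probability vector, γ ∈ [0,1], d_μ ∈ ℝ^n a probability vector with strictly positive entries, D := diag(d_μ), λ > 0, and for τ, f ∈ ℝ^n, η ∈ ℝ define L(τ, η, f) := (1−γ)μ0ᵀf + γ(Dτ)ᵀ(P f) − τᵀD f − (1/2)Σ_i (d_μ)_i f_i² + λ(η(d_μᵀτ − 1) − η²/2). Then: (i) for every fixed (f, η), the map τ ↦ L(τ, η, f) is affine on ℝ^n (in particular both convex and concave); and (ii) for every fixed τ, the map (f, η) ↦ L(τ, η, f) is concave on ℝ^n × ℝ. -/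
open Matrix

/-- A weighted sum of squares with nonnegative weights is convex. -/
theorem convexOn_sum_mul_sq {ι : Type*} [Fintype ι] {d : ι → ℝ} (hd : ∀ i, 0 ≤ d i) :
    ConvexOn ℝ Set.univ (fun f : ι → ℝ => ∑ i, d i * f i ^ 2) := by
  refine ⟨convex_univ, fun x _ y _ a b ha hb hab => ?_⟩
  simp only [smul_eq_mul, Pi.add_apply, Pi.smul_apply, Finset.mul_sum,
    ← Finset.sum_add_distrib]
  refine Finset.sum_le_sum fun i _ => ?_
  have hsq := (even_two.convexOn_pow (𝕜 := ℝ)).2 (Set.mem_univ (x i)) (Set.mem_univ (y i))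
    ha hb hab
  simp only [smul_eq_mul] at hsq
  linarith [mul_le_mul_of_nonneg_left hsq (hd i)]

/-- The GradientDICE saddle-point objective is (i) affine (hence
convex and concave) in `τ` for fixed `(f, η)`, and (ii) concave in `(f, η)`
for fixed `τ`: a convex-concave saddle-point problem without positivity
constraints on `τ`. -/
theorem stmt8 {n : ℕ} (hn : 1 ≤ n) (P : Matrix (Fin n) (Fin n) ℝ)
    (hP_nonneg : ∀ i j, 0 ≤ P i j) (hP_row : ∀ i, ∑ j, P i j = 1)
    (γ : ℝ) (hγ0 : 0 ≤ γ) (hγ1 : γ ≤ 1)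
    (μ0 : Fin n → ℝ) (hμ0_nonneg : ∀ i, 0 ≤ μ0 i) (hμ0_sum : ∑ i, μ0 i = 1)
    (dμ : Fin n → ℝ) (hdμ_pos : ∀ i, 0 < dμ i) (hdμ_sum : ∑ i, dμ i = 1)
    (lam : ℝ) (hlam : 0 < lam)
    (L : (Fin n → ℝ) → ℝ → (Fin n → ℝ) → ℝ)
    (hLdef : ∀ τ η f, L τ η f =
      (1 - γ) * (μ0 ⬝ᵥ f)
      + γ * (((Matrix.diagonal dμ).mulVec τ) ⬝ᵥ (P.mulVec f))
      - τ ⬝ᵥ ((Matrix.diagonal dμ).mulVec f)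
      - (1/2) * ∑ i, dμ i * (f i) ^ 2
      + lam * (η * ((∑ i, dμ i * τ i) - 1) - η ^ 2 / 2)) :
    (∀ f η, ∃ (g : (Fin n → ℝ) →ₗ[ℝ] ℝ) (c : ℝ), ∀ τ, L τ η f = g τ + c) ∧
    (∀ f η, ConvexOn ℝ Set.univ (fun τ => L τ η f) ∧
            ConcaveOn ℝ Set.univ (fun τ => L τ η f)) ∧
    (∀ τ, ConcaveOn ℝ Set.univ (fun p : (Fin n → ℝ) × ℝ => L τ p.2 p.1)) := by
  have haff : ∀ f η, ∃ (g : (Fin n → ℝ) →ₗ[ℝ] ℝ) (c : ℝ), ∀ τ, L τ η f = g τ + c := by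
    intro f η
    refine ⟨IsLinearMap.mk' (fun τ => γ * ((Matrix.diagonal dμ).mulVec τ ⬝ᵥ P.mulVec f)
      - τ ⬝ᵥ (Matrix.diagonal dμ).mulVec f + lam * η * (dμ ⬝ᵥ τ)) ⟨fun x y => ?_, fun a x => ?_⟩,
      (1 - γ) * (μ0 ⬝ᵥ f) - (1 / 2) * ∑ i, dμ i * f i ^ 2 - lam * η - lam * (η ^ 2 / 2),
      fun τ => ?_⟩
    · simp only [mulVec_add, add_dotProduct, dotProduct_add]
      ring
    · simp only [mulVec_smul, smul_dotProduct, dotProduct_smul, smul_eq_mul]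
      ring
    · rw [hLdef, IsLinearMap.mk'_apply, show ∑ i, dμ i * τ i = dμ ⬝ᵥ τ from rfl]
      ring
  refine ⟨haff, fun f η => ?_, fun τ => ⟨convex_univ, ?_⟩⟩
  · obtain ⟨g, c, h⟩ := haff f η
    simp only [h]
    exact ⟨(g.convexOn convex_univ).add_const c, (g.concaveOn convex_univ).add_const c⟩
  · rintro ⟨f₁, η₁⟩ - ⟨f₂, η₂⟩ - a b ha hb hab
    have hf := (convexOn_sum_mul_sq fun i => (hdμ_pos i).le).2 (Set.mem_univ f₁)
      (Set.mem_univ f₂) ha hb hab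
    have hη := (even_two.convexOn_pow (𝕜 := ℝ)).2 (Set.mem_univ η₁) (Set.mem_univ η₂) ha hb hab
    simp only [smul_eq_mul] at hf hη
    have hη' := mul_le_mul_of_nonneg_left hη hlam.le
    simp only [hLdef, Prod.smul_mk, Prod.mk_add_mk, mulVec_add, mulVec_smul, dotProduct_add,
      dotProduct_smul, smul_eq_mul]
    obtain rfl : b = 1 - a := by linarith
    linarith
end

section
/- Let C be a K×K real symmetric positive-definite matrix, A a K×K real matrix, b, m ∈ ℝ^K, λ > 0, ξ ≥ 0, γ ∈ [0,1], and assume ξI + AᵀC^{-1}A is positive definite. Define Ξ := (ξI + AᵀC^{-1}A)^{-1}, z := Ξb, β := 1 + λ bᵀΞb, w_{∞,ξ} := (1−γ)ΞAᵀC^{-1}m + λβ^{-1} z (1 − (1−γ) zᵀAᵀC^{-1}m), and b_* := (1−γ)AᵀC^{-1}m + λb. Then (AᵀC^{-1}A + λ b bᵀ + ξI) w_{∞,ξ} = b_*. -/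
open Matrix

/-- The Sherman–Morrison solution of a positive definite system with a symmetric rank-one
perturbation. -/
theorem Matrix.PosDef.add_smul_vecMulVec_mulVec_eq {n : Type*} [Fintype n] [DecidableEq n]
    {M : Matrix n n ℝ} (hM : M.PosDef) (b v : n → ℝ) {r : ℝ} (hr : 0 ≤ r) (c : ℝ) :
    (M + r • vecMulVec b b) *ᵥ
      (c • M⁻¹ *ᵥ v + (r * (1 + r * (b ⬝ᵥ M⁻¹ *ᵥ b))⁻¹ * (1 - c * (M⁻¹ *ᵥ b ⬝ᵥ v))) • M⁻¹ *ᵥ b)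
      = c • v + r • b := by
  have hdet : IsUnit M.det := M.isUnit_iff_isUnit_det.mp hM.isUnit
  have hcancel (u : n → ℝ) : M *ᵥ M⁻¹ *ᵥ u = u := by
    rw [mulVec_mulVec, mul_nonsing_inv _ hdet, one_mulVec]
  have hsymm : (M⁻¹)ᵀ = M⁻¹ := by simpa [IsHermitian] using hM.inv.isHermitian
  have hdot : M⁻¹ *ᵥ b ⬝ᵥ v = b ⬝ᵥ M⁻¹ *ᵥ v := by
    rw [dotProduct_mulVec, ← mulVec_transpose, hsymm]
  have hnonneg : 0 ≤ b ⬝ᵥ M⁻¹ *ᵥ b := by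
    simpa using hM.inv.posSemidef.dotProduct_mulVec_nonneg b
  have hβ : 1 + r * (b ⬝ᵥ M⁻¹ *ᵥ b) ≠ 0 := by positivity
  rw [hdot]
  ext i
  simp only [add_mulVec, mulVec_add, mulVec_smul, smul_mulVec, hcancel, vecMulVec_mulVec,
    Pi.add_apply, Pi.smul_apply, smul_eq_mul, MulOpposite.smul_eq_mul_unop,
    MulOpposite.unop_op]
  field_simp
  ring

/-- Sherman–Morrison identity for the GradientDICE fixed point.
With `Ξ := (ξI + AᵀC⁻¹A)⁻¹`, `z := Ξb`, `β := 1 + λ bᵀΞb`,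
`w_{∞,ξ} := (1-γ)ΞAᵀC⁻¹m + λβ⁻¹ z (1 - (1-γ) zᵀAᵀC⁻¹m)` and
`b_* := (1-γ)AᵀC⁻¹m + λb`, we have
`(AᵀC⁻¹A + λ b bᵀ + ξI) w_{∞,ξ} = b_*`. -/
theorem stmt12 {K : ℕ} (hK : 1 ≤ K)
    (C A : Matrix (Fin K) (Fin K) ℝ) (hC : C.PosDef)
    (b m : Fin K → ℝ) (lam ξ γ : ℝ) (hlam : 0 < lam) (hξ : 0 ≤ ξ)
    (hγ0 : 0 ≤ γ) (hγ1 : γ ≤ 1)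
    (hΞ : (ξ • (1 : Matrix (Fin K) (Fin K) ℝ) + A.transpose * C⁻¹ * A).PosDef) :
    (A.transpose * C⁻¹ * A + lam • (Matrix.of fun i j => b i * b j)
        + ξ • (1 : Matrix (Fin K) (Fin K) ℝ)).mulVec
      ((1 - γ) • ((ξ • (1 : Matrix (Fin K) (Fin K) ℝ)
            + A.transpose * C⁻¹ * A)⁻¹ * A.transpose * C⁻¹).mulVec m
        + (lam * (1 + lam * (b ⬝ᵥ ((ξ • (1 : Matrix (Fin K) (Fin K) ℝ)
              + A.transpose * C⁻¹ * A)⁻¹.mulVec b)))⁻¹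
            * (1 - (1 - γ) * (((ξ • (1 : Matrix (Fin K) (Fin K) ℝ)
              + A.transpose * C⁻¹ * A)⁻¹.mulVec b)
                ⬝ᵥ ((A.transpose * C⁻¹).mulVec m))))
          • ((ξ • (1 : Matrix (Fin K) (Fin K) ℝ)
              + A.transpose * C⁻¹ * A)⁻¹.mulVec b))
      = (1 - γ) • (A.transpose * C⁻¹).mulVec m + lam • b := by
  have h := hΞ.add_smul_vecMulVec_mulVec_eq b ((A.transpose * C⁻¹) *ᵥ m) hlam.le (1 - γ)
  rw [mulVec_mulVec, ← Matrix.mul_assoc] at h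
  rw [add_right_comm, add_comm (A.transpose * C⁻¹ * A) (ξ • 1)]
  exact h
end

section
/- Let P be an n×n irreducible row-stochastic matrix with stationary distribution d ∈ ℝ^n having strictly positive entries, let d_μ ∈ ℝ^n be a probability vector with strictly positive entries, D := diag(d_μ), and λ > 0. Let X be an n×K real matrix with linearly independent columns, set A := Xᵀ(I − Pᵀ)DX, C := XᵀDX, b := Xᵀd_μ, and τ* := D^{-1}d. Assume: (i) there exists w_* ∈ ℝ^K with Xw_* = τ*; (ii) XC^{-1}Xᵀ is positive definite; and (iii) the orthogonal projection of b onto the kernel of AᵀC^{-1}A is nonzero. Then, as ξ → 0⁺, the regularized solutions w_{∞,ξ} := (AᵀC^{-1}A + λ b bᵀ + ξI)^{-1}(λ b) converge to w_*. -/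
open Matrix

/-- A nonnegative irreducible matrix has at most one invariant direction on the left: a fixed
vector of `Pᵀ` with zero sum vanishes as soon as `Pᵀ` fixes some positive vector. -/
theorem eq_zero_of_transpose_mulVec_eq_self {ι : Type*} [Fintype ι] [DecidableEq ι] [Nonempty ι]
    {P : Matrix ι ι ℝ} (hP_nonneg : ∀ i j, 0 ≤ P i j)
    (hP_irred : ∀ i j, ∃ k : ℕ, 1 ≤ k ∧ 0 < (P ^ k) i j)
    {d y : ι → ℝ} (hd_pos : ∀ i, 0 < d i) (hd_stat : Pᵀ *ᵥ d = d)
    (hy_stat : Pᵀ *ᵥ y = y) (hy_sum : ∑ i, y i = 0) : y = 0 := by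
  obtain ⟨i₀, hi₀⟩ := Finite.exists_min fun i => y i / d i
  set c := y i₀ / d i₀ with hc
  have hz_stat : Pᵀ *ᵥ (y - c • d) = y - c • d := by
    rw [mulVec_sub, mulVec_smul, hd_stat, hy_stat]
  have hz_nonneg : ∀ j, 0 ≤ (y - c • d) j := fun j => by
    have := (le_div_iff₀ (hd_pos j)).1 (hi₀ j)
    simpa using this
  have hz_min : (y - c • d) i₀ = 0 := by
    simp [hc, (hd_pos i₀).ne']
  have hz_pow : ∀ k : ℕ, (P ^ k)ᵀ *ᵥ (y - c • d) = y - c • d := fun k => by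
    induction k with
    | zero => simp
    | succ k ih => rw [pow_succ, transpose_mul, ← mulVec_mulVec, ih, hz_stat]
  have hpow_nonneg : ∀ (k : ℕ) i j, 0 ≤ (P ^ k) i j := fun k => by
    induction k with
    | zero => intro i j; simp only [pow_zero, one_apply]; positivity
    | succ k ih =>
      intro i j
      rw [pow_succ, mul_apply]
      exact Finset.sum_nonneg fun l _ => mul_nonneg (ih i l) (hP_nonneg l j)
  have hz : ∀ j, y j = c * d j := fun j => by
    obtain ⟨k, -, hk⟩ := hP_irred j i₀
    have hsum : ∑ l, (P ^ k) l i₀ * (y - c • d) l = 0 := by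
      simpa [mulVec, dotProduct, hz_min] using congrFun (hz_pow k) i₀
    have hj := (Finset.sum_eq_zero_iff_of_nonneg fun l _ =>
      mul_nonneg (hpow_nonneg k l i₀) (hz_nonneg l)).1 hsum j (Finset.mem_univ j)
    have := (mul_eq_zero.1 hj).resolve_left hk.ne'
    simpa [sub_eq_zero] using this
  have hd_sum : 0 < ∑ i, d i := Finset.sum_pos (fun i _ => hd_pos i) Finset.univ_nonempty
  have hc0 : c = 0 := by
    simp only [hz, ← Finset.mul_sum] at hy_sum
    exact (mul_eq_zero.1 hy_sum).resolve_right hd_sum.ne'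
  funext j
  simp [hz, hc0]

/-- Tikhonov-regularized solutions of a nonsingular linear system converge to its solution. -/
theorem tendsto_inv_add_smul_one_mulVec {ι : Type*} [Fintype ι] [DecidableEq ι]
    {M : Matrix ι ι ℝ} (hM : IsUnit M.det) {w v : ι → ℝ} (hw : M *ᵥ w = v) (s : Set ℝ) :
    Filter.Tendsto (fun ξ : ℝ => (M + ξ • (1 : Matrix ι ι ℝ))⁻¹ *ᵥ v)
      (nhdsWithin 0 s) (nhds w) := by
  have hinv : ContinuousAt Inv.inv M :=
    continuousAt_matrix_inv M <| by
      rw [Ring.inverse_eq_inv']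
      exact continuousAt_inv₀ hM.ne_zero
  have hlin : ContinuousAt (fun ξ : ℝ => M + ξ • (1 : Matrix ι ι ℝ)) 0 := by fun_prop
  have hcomp : ContinuousAt (fun ξ : ℝ => (M + ξ • (1 : Matrix ι ι ℝ))⁻¹) 0 :=
    ContinuousAt.comp (g := Inv.inv) (by simpa using hinv) hlin
  have hvec : ContinuousAt (fun ξ : ℝ => (M + ξ • (1 : Matrix ι ι ℝ))⁻¹ *ᵥ v) 0 :=
    (Continuous.matrix_mulVec continuous_id continuous_const).continuousAt.comp hcomp
  have hlim := hvec.tendsto.mono_left (nhdsWithin_le_nhds (s := s))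
  simpa [← hw, mulVec_mulVec, nonsing_inv_mul M hM] using hlim

/-- If `C` is positive definite and no nonzero kernel vector of `A` is orthogonal to `b`, then
`AᵀCA + λ b bᵀ` is nonsingular. -/
theorem isUnit_det_transpose_mul_mul_add_smul_vecMulVec {ι κ : Type*} [Fintype ι] [DecidableEq ι]
    [Fintype κ] {A : Matrix κ ι ℝ} {C : Matrix κ κ ℝ} (hC : C.PosDef) {lam : ℝ} (hlam : 0 < lam)
    {b : ι → ℝ} (h : ∀ v, A *ᵥ v = 0 → b ⬝ᵥ v = 0 → v = 0) :
    IsUnit (Aᵀ * C * A + lam • vecMulVec b b).det := by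
  rw [isUnit_iff_ne_zero, Ne, ← exists_mulVec_eq_zero_iff]
  rintro ⟨v, hv, hMv⟩
  have hquad : (A *ᵥ v) ⬝ᵥ (C *ᵥ (A *ᵥ v)) + lam * (b ⬝ᵥ v) ^ 2 = 0 := by
    have := congrArg (v ⬝ᵥ ·) hMv
    simp only [add_mulVec, smul_mulVec, ← mulVec_mulVec, vecMulVec_mulVec, dotProduct_add,
      dotProduct_zero, dotProduct_smul] at this
    rw [dotProduct_mulVec v, vecMul_transpose] at this
    simp only [op_smul_eq_smul, smul_eq_mul, dotProduct_comm v b] at this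
    linarith
  have hA_nonneg : 0 ≤ (A *ᵥ v) ⬝ᵥ (C *ᵥ (A *ᵥ v)) := by
    simpa using hC.posSemidef.dotProduct_mulVec_nonneg (A *ᵥ v)
  have hb_nonneg : 0 ≤ lam * (b ⬝ᵥ v) ^ 2 := by positivity
  refine hv (h v ?_ ?_)
  · by_contra hne
    have : 0 < (A *ᵥ v) ⬝ᵥ (C *ᵥ (A *ᵥ v)) := by simpa using hC.dotProduct_mulVec_pos hne
    linarith
  · have : lam * (b ⬝ᵥ v) ^ 2 = 0 := by linarith
    simpa [hlam.ne'] using this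

/-- Regularization-path consistency of GradientDICE in the
average-reward case `γ = 1`. With `A := Xᵀ(I - Pᵀ)DX`, `C := XᵀDX`,
`b := Xᵀd_μ`, `τ* := D⁻¹d`, assuming (i) `τ* = Xw_*` is realizable,
(ii) `XC⁻¹Xᵀ` is positive definite, and (iii) the orthogonal projection of `b`
onto the kernel of `AᵀC⁻¹A` is nonzero (i.e. some kernel vector is not
orthogonal to `b`), the regularized solutions
`w_{∞,ξ} := (AᵀC⁻¹A + λ b bᵀ + ξI)⁻¹(λb)` converge to `w_*` as `ξ → 0⁺`. -/
theorem stmt14 {n K : ℕ} (hn : 1 ≤ n) (hK : 1 ≤ K)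
    (P : Matrix (Fin n) (Fin n) ℝ)
    (hP_nonneg : ∀ i j, 0 ≤ P i j) (hP_row : ∀ i, ∑ j, P i j = 1)
    (hP_irred : ∀ i j, ∃ k : ℕ, 1 ≤ k ∧ 0 < (P ^ k) i j)
    (d : Fin n → ℝ) (hd_pos : ∀ i, 0 < d i) (hd_sum : ∑ i, d i = 1)
    (hd_stat : P.transpose.mulVec d = d)
    (dμ : Fin n → ℝ) (hdμ_pos : ∀ i, 0 < dμ i) (hdμ_sum : ∑ i, dμ i = 1)
    (lam : ℝ) (hlam : 0 < lam)
    (X : Matrix (Fin n) (Fin K) ℝ) (hX : LinearIndependent ℝ X.transpose)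
    (A C : Matrix (Fin K) (Fin K) ℝ) (b : Fin K → ℝ)
    (hA : A = X.transpose * ((1 : Matrix (Fin n) (Fin n) ℝ) - P.transpose)
        * Matrix.diagonal dμ * X)
    (hC : C = X.transpose * Matrix.diagonal dμ * X)
    (hb : b = X.transpose.mulVec dμ)
    (wstar : Fin K → ℝ) (hwstar : X.mulVec wstar = fun i => d i / dμ i)
    (hXCX : (X * C⁻¹ * X.transpose).PosDef)
    (hker : ∃ v : Fin K → ℝ, (A.transpose * C⁻¹ * A).mulVec v = 0 ∧ v ⬝ᵥ b ≠ 0) :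
    Filter.Tendsto
      (fun ξ : ℝ => (A.transpose * C⁻¹ * A + lam • (Matrix.of fun i j => b i * b j)
          + ξ • (1 : Matrix (Fin K) (Fin K) ℝ))⁻¹.mulVec (lam • b))
      (nhdsWithin 0 (Set.Ioi 0)) (nhds wstar) := by
  have : Nonempty (Fin n) := ⟨⟨0, hn⟩⟩
  have hX_inj : Function.Injective X.mulVec := mulVec_injective_iff.2 hX
  have hXT_ker : ∀ z, Xᵀ *ᵥ z = 0 → z = 0 := fun z hz => by
    by_contra hne
    have := hXCX.dotProduct_mulVec_pos hne
    simp [← mulVec_mulVec, hz] at this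
  have hC_pos : C.PosDef := by
    rw [hC]
    simpa using (PosDef.diagonal hdμ_pos).conjTranspose_mul_mul_same hX_inj
  have hDX : ∀ v, A *ᵥ v = Xᵀ *ᵥ (diagonal dμ *ᵥ (X *ᵥ v) - Pᵀ *ᵥ (diagonal dμ *ᵥ (X *ᵥ v))) :=
    fun v => by simp [hA, ← mulVec_mulVec, sub_mulVec]
  have hb_dot : ∀ v, b ⬝ᵥ v = ∑ i, (diagonal dμ *ᵥ (X *ᵥ v)) i := fun v => by
    rw [hb, mulVec_transpose, ← dotProduct_mulVec]
    simp [dotProduct, mulVec_diagonal]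
  have hDw : diagonal dμ *ᵥ (X *ᵥ wstar) = d := by
    funext i
    rw [hwstar, mulVec_diagonal, mul_div_cancel₀ _ (hdμ_pos i).ne']
  have hA_ker : ∀ v, A *ᵥ v = 0 → b ⬝ᵥ v = 0 → v = 0 := fun v hAv hbv => by
    have hstat := (sub_eq_zero.1 (hXT_ker _ ((hDX v).symm.trans hAv))).symm
    have hy := eq_zero_of_transpose_mulVec_eq_self hP_nonneg hP_irred hd_pos hd_stat hstat
      ((hb_dot v).symm.trans hbv)
    refine hX_inj ?_
    funext i
    have := congrFun hy i
    simpa [mulVec_diagonal, (hdμ_pos i).ne'] using this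
  have hAw : A *ᵥ wstar = 0 := by rw [hDX, hDw, hd_stat, sub_self, mulVec_zero]
  have hbw : b ⬝ᵥ wstar = 1 := by rw [hb_dot, hDw, hd_sum]
  refine tendsto_inv_add_smul_one_mulVec
    (isUnit_det_transpose_mul_mul_add_smul_vecMulVec hC_pos.inv hlam hA_ker) ?_ _
  simp [add_mulVec, smul_mulVec, ← mulVec_mulVec, vecMulVec_mulVec, hAw, hbw]
end

section
/- Define J : ℝ⁵ → ℝ by J(τ₁, τ₂, f₁, f₂, η) := (1/4)τ₁²f₁ + (1/4)τ₁²f₂ + (1/4)τ₂²f₁ + (1/4)τ₂²f₂ − (1/2)τ₁²(f₁ + (1/4)f₁²) − (1/2)τ₂²(f₂ + (1/4)f₂²) + (1/2)ητ₁² + (1/2)ητ₂² − η − (1/2)η². Then: (i) all five partial derivatives of J vanish at the point (τ₁, τ₂, f₁, f₂, η) = (0, 0, 0, 0, −1); (ii) sup over (f₁, f₂, η) ∈ ℝ³ of J(0, 0, f₁, f₂, η) equals 1/2, while sup over (f₁, f₂, η) ∈ ℝ³ of J(1, 1, f₁, f₂, η) equals 0. In particular, (0, 0, 0, 0, −1)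 is a stationary point of J at which the primal variables (τ₁, τ₂) = (0, 0) are not optimal for the min-max problem min_{τ₁,τ₂} max_{f₁,f₂,η} J. -/
/-- A quadratic function in vertex form has zero derivative at its vertex. -/
theorem hasDerivAt_quadratic_vertex (a c x : ℝ) :
    HasDerivAt (fun t : ℝ => c + a * (t - x) ^ 2) 0 x := by
  simpa using ((((hasDerivAt_id x).sub_const x).pow 2).const_mul a).const_add c

/-- The hard example for GenDICE. For
`J(τ₁,τ₂,f₁,f₂,η) = (1/4)τ₁²f₁ + (1/4)τ₁²f₂ + (1/4)τ₂²f₁ + (1/4)τ₂²f₂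
  - (1/2)τ₁²(f₁ + (1/4)f₁²) - (1/2)τ₂²(f₂ + (1/4)f₂²)
  + (1/2)ητ₁² + (1/2)ητ₂² - η - (1/2)η²`:
(i) all five partial derivatives of `J` vanish at `(0,0,0,0,-1)`;
(ii) `sup_{f₁,f₂,η} J(0,0,f₁,f₂,η) = 1/2` while `sup_{f₁,f₂,η} J(1,1,f₁,f₂,η) = 0`,
so the stationary point `(0,0,0,0,-1)` is not primal-optimal for the min-max
problem. -/
theorem stmt15 (J : ℝ → ℝ → ℝ → ℝ → ℝ → ℝ)
    (hJ : ∀ τ₁ τ₂ f₁ f₂ η, J τ₁ τ₂ f₁ f₂ η =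
      (1/4) * τ₁^2 * f₁ + (1/4) * τ₁^2 * f₂ + (1/4) * τ₂^2 * f₁ + (1/4) * τ₂^2 * f₂
      - (1/2) * τ₁^2 * (f₁ + (1/4) * f₁^2) - (1/2) * τ₂^2 * (f₂ + (1/4) * f₂^2)
      + (1/2) * η * τ₁^2 + (1/2) * η * τ₂^2 - η - (1/2) * η^2) :
    (HasDerivAt (fun t => J t 0 0 0 (-1)) 0 0 ∧
     HasDerivAt (fun t => J 0 t 0 0 (-1)) 0 0 ∧
     HasDerivAt (fun t => J 0 0 t 0 (-1)) 0 0 ∧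
     HasDerivAt (fun t => J 0 0 0 t (-1)) 0 0 ∧
     HasDerivAt (fun t => J 0 0 0 0 t) 0 (-1)) ∧
    IsLUB (Set.range fun p : ℝ × ℝ × ℝ => J 0 0 p.1 p.2.1 p.2.2) (1/2) ∧
    IsLUB (Set.range fun p : ℝ × ℝ × ℝ => J 1 1 p.1 p.2.1 p.2.2) 0 := by
  refine ⟨⟨?_, ?_, ?_, ?_, ?_⟩, IsGreatest.isLUB ⟨⟨(0, 0, -1), ?_⟩, ?_⟩,
    IsGreatest.isLUB ⟨⟨(0, 0, 0), ?_⟩, ?_⟩⟩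
  · convert hasDerivAt_quadratic_vertex (-1/2) (1/2) 0 using 2 with t
    rw [hJ]; ring
  · convert hasDerivAt_quadratic_vertex (-1/2) (1/2) 0 using 2 with t
    rw [hJ]; ring
  · convert hasDerivAt_quadratic_vertex 0 (1/2) 0 using 2 with t
    rw [hJ]; ring
  · convert hasDerivAt_quadratic_vertex 0 (1/2) 0 using 2 with t
    rw [hJ]; ring
  · convert hasDerivAt_quadratic_vertex (-1/2) (1/2) (-1) using 2 with t
    rw [hJ]; ring
  · norm_num [hJ]
  · rintro _ ⟨⟨f₁, f₂, η⟩, rfl⟩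
    simp only [hJ]
    linarith [sq_nonneg (η + 1)]
  · norm_num [hJ]
  · rintro _ ⟨⟨f₁, f₂, η⟩, rfl⟩
    simp only [hJ]
    linarith [sq_nonneg f₁, sq_nonneg f₂, sq_nonneg η]
end
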